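/- For all nonnegative integers m and n, D(m,n) = Σ_{0 ≤ ℓ ≤ n} c(n − ℓ) · M(m − n, ℓ), where D(m,n) := π(m,n) − π(m−1,n) with π(−1,n) := 0. -/

import Mathlib

open Finset

/-- A pair of sequences of parts is *steadily decreasing* if
`min (a i) (b i) ≥ max (a (i+1)) (b (i+1))` for all `i`. -/
noncomputable def SteadilyDecreasing (a b : ℕ → ℕ) : Prop :=
  ∀ i, max (a (i + 1)) (b (i + 1)) ≤ min (a i) (b i)

/-- `bipartitePi m n` is the number of pairs of partitions (given as non-increasing,
finitely supported sequences) of the bipartite number `(m, n)` with steadily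
decreasing parts. -/
noncomputable def bipartitePi (m n : ℕ) : ℕ :=
  Nat.card {p : (ℕ →₀ ℕ) × (ℕ →₀ ℕ) //
    (∀ i, p.1 (i + 1) ≤ p.1 i) ∧ (∀ i, p.2 (i + 1) ≤ p.2 i) ∧
    SteadilyDecreasing p.1 p.2 ∧
    (p.1.sum fun _ x => x) = m ∧ (p.2.sum fun _ x => x) = n}

/-- The partition function `p n`. -/
noncomputable def partitionCount (n : ℕ) : ℕ := Nat.card (Nat.Partition n)

/-- The partition function extended to the integers, with `p r = 0` for `r < 0`. -/
noncomputable def partitionCountInt (r : ℤ) : ℕ := if 0 ≤ r then partitionCount r.toNat else 0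

/-- The cubic partition function `c n`, counting partitions of `n` in which even
parts come in two colors (equivalently, pairs of a partition together with a
partition into even parts, of total size `n`). -/
noncomputable def cubicPartition (n : ℕ) : ℕ :=
  Nat.card {p : Multiset ℕ × Multiset ℕ //
    (∀ i ∈ p.1, 0 < i) ∧ (∀ i ∈ p.2, 0 < i ∧ Even i) ∧ p.1.sum + p.2.sum = n}

/-- The Andrews–Garvan crank of a partition: the largest part if there are no ones,
and otherwise the number of parts larger than the number of ones minus the number of
ones. -/
noncomputable def crank {n : ℕ} (l : n.Partition) : ℤ :=
  if l.parts.count 1 = 0 then (l.parts.sup : ℤ)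
  else ((l.parts.filter fun p => l.parts.count 1 < p).card : ℤ) - l.parts.count 1

/-- `crankM m n` is the crank counting function `M(m, n)`: the number of partitions
of `n` with crank `m`, with the standard convention at `n = 1`
(`M(0,1) = -1`, `M(±1,1) = 1`, `M(m,1) = 0` otherwise). -/
noncomputable def crankM (m : ℤ) (n : ℕ) : ℤ :=
  if n = 1 then (if m = 0 then -1 else if m.natAbs = 1 then 1 else 0)
  else (Nat.card {l : n.Partition // crank l = m} : ℤ)

/-- `alphaBip s k = Σ_{ℓ ≥ 0} (-1)^ℓ p(k - ℓ(ℓ+1)/2 - ℓ s)`. -/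
noncomputable def alphaBip (s k : ℕ) : ℤ :=
  ∑' ℓ : ℕ, (-1 : ℤ) ^ ℓ *
    (partitionCountInt ((k : ℤ) - ℓ * (ℓ + 1) / 2 - ℓ * s) : ℤ)

/-- `Dbip m n = π(m,n) - π(m-1,n)`, with `π(-1,n) := 0`. -/
noncomputable def Dbip (m n : ℕ) : ℤ :=
  (bipartitePi m n : ℤ) - if m = 0 then 0 else (bipartitePi (m - 1) n : ℤ)


/-! ### Generating functions -/

abbrev R2 := PowerSeries (PowerSeries ℤ)

noncomputable def cf (f : R2) (m n : ℕ) : ℤ := PowerSeries.coeff m (PowerSeries.coeff n f)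

theorem cf_ext {f g : R2} (h : ∀ m n, cf f m n = cf g m n) : f = g := by
  ext n m; exact h m n

theorem cf_add (f g : R2) (m n : ℕ) : cf (f + g) m n = cf f m n + cf g m n := by simp [cf]
theorem cf_sub (f g : R2) (m n : ℕ) : cf (f - g) m n = cf f m n - cf g m n := by simp [cf]
theorem cf_zero (m n : ℕ) : cf 0 m n = 0 := by simp [cf]
theorem cf_one (m n : ℕ) : cf 1 m n = if (m, n) = (0, 0) then 1 else 0 := by
  by_cases hn : n = 0 <;> by_cases hm : m = 0 <;> simp [cf, PowerSeries.coeff_one, hm, hn]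

theorem cf_mul (f g : R2) (m n : ℕ) : cf (f * g) m n =
    ∑ p ∈ antidiagonal n, ∑ q ∈ antidiagonal m, cf f q.1 p.1 * cf g q.2 p.2 := by
  simp [cf, PowerSeries.coeff_mul]

noncomputable def gf {S : Type*} (A : Set S) (wt : S → ℕ × ℕ) : R2 :=
  PowerSeries.mk fun n => PowerSeries.mk fun m => ((A ∩ wt ⁻¹' {(m, n)}).ncard : ℤ)

theorem cf_gf {S : Type*} (A : Set S) (wt : S → ℕ × ℕ) (m n : ℕ) :
    cf (gf A wt) m n = ((A ∩ wt ⁻¹' {(m, n)}).ncard : ℤ) := by simp [cf, gf]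

def FinW {S : Type*} (A : Set S) (wt : S → ℕ × ℕ) : Prop :=
  ∀ N : ℕ, (A ∩ {s | (wt s).1 + (wt s).2 ≤ N}).Finite

theorem FinW.fib {S : Type*} {A : Set S} {wt : S → ℕ × ℕ} (h : FinW A wt) (w : ℕ × ℕ) :
    (A ∩ wt ⁻¹' {w}).Finite := by
  refine (h (w.1 + w.2)).subset ?_
  rintro s ⟨hs, hw⟩
  simp only [Set.mem_preimage, Set.mem_singleton_iff] at hw
  exact ⟨hs, by simp [hw]⟩

theorem FinW.mono {S : Type*} {A B : Set S} {wt wt' : S → ℕ × ℕ} (h : FinW A wt)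
    (hBA : B ⊆ A) (hw : ∀ s ∈ B, (wt s).1 + (wt s).2 ≤ (wt' s).1 + (wt' s).2) : FinW B wt' := by
  intro N
  refine (h N).subset ?_
  rintro s ⟨hs, hN⟩
  exact ⟨hBA hs, (hw s hs).trans hN⟩

theorem FinW.prod {S T : Type*} {A : Set S} {B : Set T} {wt : S → ℕ × ℕ} {wt' : T → ℕ × ℕ}
    (h : FinW A wt) (h' : FinW B wt') : FinW (A ×ˢ B) (fun p => wt p.1 + wt' p.2) := by
  intro N
  refine ((h N).prod (h' N)).subset ?_
  rintro ⟨s, t⟩ ⟨hs, hN⟩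
  simp only [Set.mem_ofPred_eq, Prod.fst_add, Prod.snd_add] at hN
  simp only [Set.mem_prod] at hs
  simp only [Set.mem_prod, Set.mem_inter_iff, Set.mem_ofPred_eq]
  exact ⟨⟨hs.1, by omega⟩, hs.2, by omega⟩

theorem gf_mul {S T : Type*} {A : Set S} {B : Set T} {wt : S → ℕ × ℕ} {wt' : T → ℕ × ℕ}
    (h : FinW A wt) (h' : FinW B wt') :
    gf A wt * gf B wt' = gf (A ×ˢ B) (fun p => wt p.1 + wt' p.2) := by
  classical
  apply cf_ext
  intro m n
  have hf := (h.prod h').fib (m, n)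
  rw [cf_mul, cf_gf, Set.ncard_eq_toFinset_card _ hf,
    Finset.card_eq_sum_card_fiberwise (f := fun p : S × T => (((wt p.1).2, (wt' p.2).2), ((wt p.1).1, (wt' p.2).1)))
      (t := antidiagonal n ×ˢ antidiagonal m), Finset.sum_product, Nat.cast_sum]
  · refine Finset.sum_congr rfl fun p hp => ?_
    rw [Nat.cast_sum]
    refine Finset.sum_congr rfl fun q hq => ?_
    rw [cf_gf, cf_gf, ← Nat.cast_mul, ← Set.ncard_prod, Nat.cast_inj, ← Set.ncard_coe_finset]
    congr 1
    ext ⟨s, t⟩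
    rw [HasAntidiagonal.mem_antidiagonal] at hp hq
    simp only [Set.mem_prod, Set.mem_inter_iff, Set.mem_preimage, Set.mem_singleton_iff,
      Finset.coe_filter, Set.Finite.mem_toFinset, Set.mem_ofPred_eq, Prod.ext_iff,
      Prod.fst_add, Prod.snd_add]
    constructor
    · rintro ⟨⟨a, b, c⟩, d, e, f⟩
      refine ⟨⟨⟨a, d⟩, by omega, by omega⟩, ⟨c, f⟩, b, e⟩
    · rintro ⟨⟨⟨a, d⟩, _, _⟩, ⟨c, f⟩, b, e⟩
      exact ⟨⟨a, b, c⟩, d, e, f⟩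
  · rintro ⟨s, t⟩ hp
    simp only [Set.Finite.coe_toFinset, Set.mem_inter_iff, Set.mem_preimage, Set.mem_singleton_iff,
      Prod.ext_iff, Prod.fst_add, Prod.snd_add] at hp
    simp only [Finset.coe_product, Set.mem_prod, Finset.mem_coe, HasAntidiagonal.mem_antidiagonal]
    exact ⟨hp.2.2, hp.2.1⟩

theorem gf_bij {S T : Type*} {A : Set S} {B : Set T} {wt : S → ℕ × ℕ} {wt' : T → ℕ × ℕ}
    (f : S → T) (hf : Set.BijOn f A B) (hw : ∀ s ∈ A, wt' (f s) = wt s) :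
    gf A wt = gf B wt' := by
  apply cf_ext
  intro m n
  rw [cf_gf, cf_gf, ← Set.InjOn.ncard_image (hf.injOn.mono Set.inter_subset_left)]
  congr 2
  ext t
  constructor
  · rintro ⟨s, ⟨hs, hs'⟩, rfl⟩
    refine ⟨hf.mapsTo hs, ?_⟩
    simp only [Set.mem_preimage] at hs' ⊢
    rw [hw s hs]; exact hs'
  · rintro ⟨ht, ht'⟩
    obtain ⟨s, hs, rfl⟩ := hf.surjOn ht
    refine ⟨s, ⟨hs, ?_⟩, rfl⟩
    simp only [Set.mem_preimage] at ht' ⊢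
    rw [← hw s hs]; exact ht'

theorem gf_inv {S T : Type*} {A : Set S} {B : Set T} {wt : S → ℕ × ℕ} {wt' : T → ℕ × ℕ}
    (f : S → T) (g : T → S) (hf : ∀ s ∈ A, f s ∈ B) (hg : ∀ t ∈ B, g t ∈ A)
    (hl : ∀ s ∈ A, g (f s) = s) (hr : ∀ t ∈ B, f (g t) = t)
    (hw : ∀ s ∈ A, wt' (f s) = wt s) :
    gf A wt = gf B wt' :=
  gf_bij f (Set.InvOn.bijOn (f' := g) ⟨hl, hr⟩ hf hg) hw

theorem gf_split {S : Type*} {A : Set S} {wt : S → ℕ × ℕ} (h : FinW A wt) (p : S → Prop) :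
    gf A wt = gf {s | s ∈ A ∧ p s} wt + gf {s | s ∈ A ∧ ¬ p s} wt := by
  apply cf_ext
  intro m n
  rw [cf_add, cf_gf, cf_gf, cf_gf, ← Nat.cast_add, Nat.cast_inj, ← Set.ncard_union_eq ?_
    ((h.fib (m, n)).subset fun s hs => ⟨hs.1.1, hs.2⟩)
    ((h.fib (m, n)).subset fun s hs => ⟨hs.1.1, hs.2⟩)]
  · congr 1
    ext s
    simp only [Set.mem_union, Set.mem_inter_iff, Set.mem_ofPred_eq]
    tauto
  · rw [Set.disjoint_left]
    rintro s ⟨⟨_, h1⟩, _⟩ ⟨⟨_, h2⟩, _⟩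
    exact h2 h1

noncomputable def mon (w : ℕ × ℕ) : R2 := gf (Set.univ : Set Unit) (fun _ => w)

theorem FinW_unit (w : ℕ × ℕ) : FinW (Set.univ : Set Unit) (fun _ => w) :=
  fun _ => Set.toFinite _

theorem mon_mul_gf {S : Type*} {A : Set S} {wt : S → ℕ × ℕ} (h : FinW A wt) (w : ℕ × ℕ) :
    mon w * gf A wt = gf A (fun s => wt s + w) := by
  rw [mon, gf_mul (FinW_unit w) h]
  refine gf_inv (fun p => p.2) (fun s => ((), s)) ?_ ?_ ?_ ?_ ?_
  · rintro ⟨_, s⟩ ⟨_, hs⟩; exact hs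
  · intro s hs; exact ⟨trivial, hs⟩
  · rintro ⟨_, s⟩ _; rfl
  · intro s _; rfl
  · rintro ⟨_, s⟩ _; exact add_comm _ _

theorem cf_mon (w : ℕ × ℕ) (m n : ℕ) : cf (mon w) m n = if w = (m, n) then 1 else 0 := by
  rw [mon, cf_gf]
  split_ifs with h
  · simp [h]
  · have : (Set.univ ∩ (fun _ : Unit => w) ⁻¹' {(m, n)}) = ∅ := by
      ext; simp [h]
    rw [this]; simp

theorem mon_zero : mon 0 = 1 := by
  apply cf_ext; intro m n
  rw [cf_mon, cf_one]
  simp [Prod.ext_iff, eq_comm]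

theorem cf_mon_mul (w : ℕ × ℕ) (f : R2) (m n : ℕ) : cf (mon w * f) m n =
    if w.1 ≤ m ∧ w.2 ≤ n then cf f (m - w.1) (n - w.2) else 0 := by
  have : mon w = PowerSeries.C (PowerSeries.X ^ w.1) * PowerSeries.X ^ w.2 := by
    apply cf_ext; intro m n
    rw [cf_mon]
    simp only [cf, PowerSeries.coeff_C_mul, PowerSeries.coeff_X_pow, mul_ite, mul_one, mul_zero]
    obtain ⟨a, b⟩ := w
    by_cases h : n = b
    · simp [h, PowerSeries.coeff_X_pow, eq_comm]
    · simp [h, Ne.symm h]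
  rw [this, cf, mul_assoc, PowerSeries.coeff_C_mul, PowerSeries.coeff_X_pow_mul']
  by_cases h2 : w.2 ≤ n
  · simp only [h2, if_true, PowerSeries.coeff_X_pow_mul', and_true, cf]
  · simp [h2, PowerSeries.coeff_X_pow_mul']

theorem mon_mul_mon (v w : ℕ × ℕ) : mon v * mon w = mon (v + w) := by
  rw [show mon w = gf (Set.univ : Set Unit) (fun _ => w) from rfl, mon_mul_gf (FinW_unit w)]
  rw [add_comm v w]; rfl

/-- uniqueness principle -/
theorem vanish (D : ℕ → R2) (w : ℕ → ℕ × ℕ) (hw : ∀ j, 0 < (w j).1 + (w j).2)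
    (hD : ∀ j, D (j + 1) = D j - mon (w j) * D j)
    (h0 : ∀ j m n, m + n < j → cf (D j) m n = 0) (j : ℕ) : D j = 0 := by
  have key : ∀ N j m n, m + n = N → cf (D j) m n = 0 := by
    intro N
    induction N using Nat.strong_induction_on with
    | _ N ih =>
      intro j m n hmn
      have step : ∀ j, cf (D (j + 1)) m n = cf (D j) m n := by
        intro j
        rw [hD, cf_sub, cf_mon_mul]
        split_ifs with h
        · have := hw j
          rw [ih _ (by omega) j (m - (w j).1) (n - (w j).2) rfl, sub_zero]
        · simp
      have step2 : ∀ k, cf (D (j + k)) m n = cf (D j) m n := by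
        intro k
        induction k with
        | zero => rfl
        | succ k ihk => rw [← add_assoc, step, ihk]
      rw [← step2 (N + 1)]
      exact h0 _ _ _ (by omega)
  apply cf_ext
  intro m n
  rw [key _ j m n rfl, cf_zero]

/-- agreement up to total degree `j` -/
def Cong (j : ℕ) (f g : R2) : Prop := ∀ m n, m + n < j → cf f m n = cf g m n

theorem Cong.mul {j : ℕ} {f g f' g' : R2} (h : Cong j f g) (h' : Cong j f' g') :
    Cong j (f * f') (g * g') := by
  intro m n hmn
  rw [cf_mul, cf_mul]
  refine Finset.sum_congr rfl fun p hp => Finset.sum_congr rfl fun q hq => ?_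
  rw [HasAntidiagonal.mem_antidiagonal] at hp hq
  rw [h _ _ (by omega), h' _ _ (by omega)]


noncomputable def W (w : ℕ → ℕ × ℕ) (c : ℕ →₀ ℕ) : ℕ × ℕ := Finsupp.linearCombination ℕ w c

theorem W_zero (w : ℕ → ℕ × ℕ) : W w 0 = 0 := by simp [W]
theorem W_add (w : ℕ → ℕ × ℕ) (c d : ℕ →₀ ℕ) : W w (c + d) = W w c + W w d := by simp [W]
theorem W_single (w : ℕ → ℕ × ℕ) (i a : ℕ) : W w (Finsupp.single i a) = a • w i := by simp [W]

theorem W_congr {w w' : ℕ → ℕ × ℕ} {c : ℕ →₀ ℕ} (h : ∀ i, c i ≠ 0 → w i = w' i) :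
    W w c = W w' c := by
  rw [W, W, Finsupp.linearCombination_apply, Finsupp.linearCombination_apply]
  refine Finsupp.sum_congr fun i hi => ?_
  rw [h i (by simpa using hi)]

theorem W_weight_add (w w' : ℕ → ℕ × ℕ) (c : ℕ →₀ ℕ) :
    W (fun i => w i + w' i) c = W w c + W w' c := by
  rw [W, W, W, Finsupp.linearCombination_apply, Finsupp.linearCombination_apply,
    Finsupp.linearCombination_apply, ← Finsupp.sum_add]
  simp only [smul_add]

theorem W_deg (w : ℕ → ℕ × ℕ) (c : ℕ →₀ ℕ) :
    (W w c).1 + (W w c).2 = c.sum fun i a => a * ((w i).1 + (w i).2) := by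
  rw [W, Finsupp.linearCombination_apply, Finsupp.sum, Finsupp.sum, Prod.fst_sum, Prod.snd_sum,
    ← Finset.sum_add_distrib]
  refine Finset.sum_congr rfl fun i _ => ?_
  simp [mul_add]

theorem W_deg_le (w : ℕ → ℕ × ℕ) (c : ℕ →₀ ℕ) (i : ℕ) :
    c i * ((w i).1 + (w i).2) ≤ (W w c).1 + (W w c).2 := by
  rw [W_deg]
  by_cases h : c i = 0
  · simp [h]
  · exact Finset.single_le_sum (f := fun i => c i * ((w i).1 + (w i).2)) (fun _ _ => Nat.zero_le _)
      (by simpa using h)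

def Good (w : ℕ → ℕ × ℕ) : Prop := ∀ i, i + 1 ≤ (w i).1 + (w i).2

theorem FinW_W {w : ℕ → ℕ × ℕ} (hw : Good w) : FinW Set.univ (W w) := by
  intro N
  refine (Set.finite_Iic (Finsupp.indicator (Finset.range N) (fun _ _ => N))).subset ?_
  rintro c ⟨_, hc⟩
  simp only [Set.mem_ofPred_eq] at hc
  rw [Set.mem_Iic]
  intro i
  have h1 := W_deg_le w c i
  have h2 := hw i
  rw [Finsupp.indicator_apply]
  have h3 : c i * (i + 1) ≤ N := (Nat.mul_le_mul_left _ h2).trans (h1.trans hc)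
  split_ifs with h
  · nlinarith
  · simp at h
    by_contra hne
    have : 1 ≤ c i := by omega
    nlinarith

noncomputable def P (w : ℕ → ℕ × ℕ) : R2 := gf Set.univ (W w)

theorem P_peel {w : ℕ → ℕ × ℕ} (hw : Good w) :
    P (fun i => w (i + 1)) = P w - mon (w 0) * P w := by
  rw [eq_sub_iff_add_eq, P, P, mon_mul_gf (FinW_W hw)]
  rw [gf_split (FinW_W hw) (fun c => c 0 = 0)]
  congr 1
  · refine gf_inv (fun c => c.mapDomain Nat.succ)
      (fun c => c.comapDomain Nat.succ Nat.succ_injective.injOn) ?_ ?_ ?_ ?_ ?_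
    · intro c _
      refine ⟨trivial, ?_⟩
      exact Finsupp.mapDomain_of_notMem_range _ _ (by simp)
    · intro c _; trivial
    · intro c _
      exact Finsupp.comapDomain_mapDomain _ Nat.succ_injective _
    · rintro c ⟨_, hc⟩
      ext i
      cases i with
      | zero => rw [Finsupp.mapDomain_of_notMem_range _ _ (by simp), hc]
      | succ i =>
        rw [← Nat.succ_eq_add_one, Finsupp.mapDomain_apply Nat.succ_injective]; rfl
    · intro c _
      rw [W, Finsupp.linearCombination_mapDomain]; rfl
  · refine gf_inv (fun c => c + Finsupp.single 0 1) (fun c => c - Finsupp.single 0 1) ?_ ?_ ?_ ?_ ?_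
    · intro c _; exact ⟨trivial, by simp⟩
    · intro c _; trivial
    · intro c _; simp
    · rintro c ⟨_, hc⟩
      refine tsub_add_cancel_of_le ?_
      rw [Finsupp.single_le_iff]; omega
    · intro c _
      simp [W_add, W_single]

theorem gf_cong {S : Type*} {A B : Set S} {wt wt' : S → ℕ × ℕ} {j : ℕ}
    (h : ∀ s, (wt s).1 + (wt s).2 < j → s ∈ A → s ∈ B ∧ wt' s = wt s)
    (h' : ∀ s, (wt' s).1 + (wt' s).2 < j → s ∈ B → s ∈ A ∧ wt' s = wt s) :
    Cong j (gf A wt) (gf B wt') := by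
  intro m n hmn
  rw [cf_gf, cf_gf]
  congr 2
  ext s
  simp only [Set.mem_inter_iff, Set.mem_preimage, Set.mem_singleton_iff]
  constructor
  · rintro ⟨hs, hw⟩
    obtain ⟨h1, h2⟩ := h s (by rw [hw]; exact hmn) hs
    exact ⟨h1, h2.trans hw⟩
  · rintro ⟨hs, hw⟩
    obtain ⟨h1, h2⟩ := h' s (by rw [hw]; exact hmn) hs
    exact ⟨h1, h2.symm.trans hw⟩

theorem P_cong_one {w : ℕ → ℕ × ℕ} {j : ℕ} (hw : ∀ i, j ≤ (w i).1 + (w i).2) :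
    Cong j (P w) 1 := by
  rw [← mon_zero]
  have : mon 0 = gf {(0 : ℕ →₀ ℕ)} (W w) := by
    refine gf_inv (fun _ => 0) (fun _ => ()) ?_ ?_ ?_ ?_ ?_ <;> simp [W_zero]
  rw [this]
  refine gf_cong ?_ ?_
  · intro c hc _
    refine ⟨?_, rfl⟩
    rw [Set.mem_singleton_iff]
    ext i
    have h1 := W_deg_le w c i
    have h2 := hw i
    by_contra hne
    have h3 : 1 ≤ c i := by simp at hne; omega
    nlinarith
  · intro c _ _; exact ⟨trivial, rfl⟩

/-! ### The two recursions -/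

/-- weights: parts `≤ k` have weight `q^i`, parts `> k` weight `z q^i` -/
def wk (k i : ℕ) : ℕ × ℕ := if i < k then (i + 1, i + 1) else (i + 2, i + 1)

def qq (i : ℕ) : ℕ × ℕ := (i + 1, i + 1)

theorem wk_good (k : ℕ) : Good (wk k) := by
  intro i; unfold wk; split_ifs <;> simp

theorem qq_good : Good qq := by
  intro i; simp [qq]

noncomputable def wtH (j : ℕ) (p : ℕ × (ℕ →₀ ℕ)) : ℕ × ℕ := p.1 • (j, j + 1) + W (wk p.1) p.2

theorem W_deg_mono {w w' : ℕ → ℕ × ℕ} (h : ∀ i, (w i).1 + (w i).2 ≤ (w' i).1 + (w' i).2)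
    (c : ℕ →₀ ℕ) : (W w c).1 + (W w c).2 ≤ (W w' c).1 + (W w' c).2 := by
  rw [W_deg, W_deg]
  exact Finset.sum_le_sum fun i _ => Nat.mul_le_mul_left _ (h i)

theorem FinW_pair : FinW (Set.univ : Set (ℕ × (ℕ →₀ ℕ))) (fun p => (0, p.1) + W qq p.2) := by
  have h1 : FinW (Set.univ : Set ℕ) (fun k => (0, k)) := by
    intro N
    refine (Set.finite_Iic N).subset ?_
    rintro k ⟨_, hk⟩
    simpa using hk
  have := h1.prod (FinW_W qq_good)
  rwa [Set.univ_prod_univ] at this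

theorem FinW_H (j : ℕ) (A : Set (ℕ × (ℕ →₀ ℕ))) : FinW A (wtH j) := by
  refine FinW_pair.mono (Set.subset_univ _) ?_
  rintro ⟨k, c⟩ _
  have := W_deg_mono (w := qq) (w' := wk k) (fun i => by unfold wk qq; split_ifs <;> simp) c
  simp only [wtH, Prod.fst_add, Prod.snd_add, Prod.smul_fst, Prod.smul_snd, smul_eq_mul]
  nlinarith

noncomputable def H (j : ℕ) : R2 := gf Set.univ (wtH j)

/-- add a part equal to the first coordinate -/
noncomputable def addTop (p : ℕ × (ℕ →₀ ℕ)) : ℕ × (ℕ →₀ ℕ) :=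
  (p.1, if p.1 = 0 then p.2 else p.2 + Finsupp.single (p.1 - 1) 1)
noncomputable def subTop (p : ℕ × (ℕ →₀ ℕ)) : ℕ × (ℕ →₀ ℕ) :=
  (p.1, if p.1 = 0 then p.2 else p.2 - Finsupp.single (p.1 - 1) 1)

theorem sub_single_add {c : ℕ →₀ ℕ} {i : ℕ} (h : c i ≠ 0) :
    c - Finsupp.single i 1 + Finsupp.single i 1 = c := by
  refine tsub_add_cancel_of_le ?_
  rw [Finsupp.single_le_iff]; omega

theorem subTop_addTop (p : ℕ × (ℕ →₀ ℕ)) : subTop (addTop p) = p := by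
  obtain ⟨k, c⟩ := p
  by_cases h : k = 0 <;> simp [subTop, addTop, h]

theorem addTop_subTop (p : ℕ × (ℕ →₀ ℕ)) (h : p.1 = 0 ∨ p.2 (p.1 - 1) ≠ 0) :
    addTop (subTop p) = p := by
  obtain ⟨k, c⟩ := p
  by_cases hk : k = 0
  · simp [subTop, addTop, hk]
  · simp only [hk, false_or] at h
    simp [subTop, addTop, hk, sub_single_add h]

theorem wtH_addTop (j : ℕ) (p : ℕ × (ℕ →₀ ℕ)) : wtH j (addTop p) = wtH (j + 1) p := by
  obtain ⟨k, c⟩ := p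
  by_cases h : k = 0
  · simp [wtH, addTop, h]
  · have : wk k (k - 1) = (k, k) := by
      unfold wk; rw [if_pos (by omega)]; ext <;> simp <;> omega
    simp only [wtH, addTop, h, if_false, W_add, W_single, this]
    ext <;> simp <;> ring

theorem H_rec (j : ℕ) :
    H j + mon (j + 2, j + 2) * H (j + 1) = H (j + 1) + mon (j, j + 1) * H j := by
  have e1 : gf {p | p ∈ Set.univ ∧ (p.1 = 0 ∨ p.2 (p.1 - 1) ≠ 0)} (wtH j) = H (j + 1) := by
    refine gf_inv subTop addTop ?_ ?_ ?_ ?_ ?_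
    · intro _ _; trivial
    · rintro ⟨k, c⟩ _
      refine ⟨trivial, ?_⟩
      by_cases h : k = 0 <;> simp [addTop, h]
    · intro p hp; exact addTop_subTop p hp.2
    · intro p _; exact subTop_addTop p
    · intro p hp
      rw [← wtH_addTop, addTop_subTop p hp.2]
  have hA : FinW Set.univ (fun s => wtH j s + (j, j + 1)) :=
    (FinW_H j Set.univ).mono subset_rfl (fun s _ => by simp; omega)
  have e2 : gf {p | p ∈ Set.univ ∧ ¬ (p.1 = 0 ∨ p.2 (p.1 - 1) ≠ 0)} (wtH j) =
      gf {p | p ∈ Set.univ ∧ p.2 p.1 = 0} (fun s => wtH j s + (j, j + 1)) := by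
    symm
    refine gf_inv (fun p => (p.1 + 1, p.2)) (fun p => (p.1 - 1, p.2)) ?_ ?_ ?_ ?_ ?_
    · rintro ⟨k, c⟩ ⟨_, h⟩
      exact ⟨trivial, by simpa using h⟩
    · rintro ⟨k, c⟩ ⟨_, h⟩
      simp only [not_or, not_not] at h
      exact ⟨trivial, h.2⟩
    · rintro ⟨k, c⟩ _; rfl
    · rintro ⟨k, c⟩ ⟨_, h⟩
      simp only [not_or, not_not] at h
      ext <;> simp; omega
    · rintro ⟨k, c⟩ ⟨_, h⟩
      have : W (wk (k + 1)) c = W (wk k) c := W_congr fun i hi => by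
        have : i ≠ k := by rintro rfl; exact hi h
        unfold wk
        by_cases h1 : i < k
        · rw [if_pos h1, if_pos (by omega)]
        · rw [if_neg h1, if_neg (by omega)]
      simp only [wtH, this]
      ext <;> simp <;> ring
  have e3 : gf {p | p ∈ Set.univ ∧ ¬ p.2 p.1 = 0} (fun s => wtH j s + (j, j + 1)) =
      mon (j + 2, j + 2) * H (j + 1) := by
    rw [H, mon_mul_gf (FinW_H _ _)]
    symm
    refine gf_inv (fun p => (p.1, p.2 + Finsupp.single p.1 1))
      (fun p => (p.1, p.2 - Finsupp.single p.1 1)) ?_ ?_ ?_ ?_ ?_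
    · intro p _; exact ⟨trivial, by simp⟩
    · intro _ _; trivial
    · intro p _; simp
    · rintro ⟨k, c⟩ ⟨_, h⟩
      simp only [sub_single_add h]
    · rintro ⟨k, c⟩ _
      have : wk k k = (k + 2, k + 1) := by simp [wk]
      simp only [wtH, W_add, W_single, this]
      ext <;> simp <;> ring
  rw [← e3]
  conv_rhs => rw [H.eq_1 j, mon_mul_gf (FinW_H j _), gf_split hA (fun p => p.2 p.1 = 0), ← e2]
  conv_lhs => rw [H, gf_split (FinW_H j _) (fun p => p.1 = 0 ∨ p.2 (p.1 - 1) ≠ 0), e1]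
  ring

noncomputable def Yj (j : ℕ) : R2 := P (fun i => (i + j, i + j + 1))
noncomputable def Qj (j : ℕ) : R2 := P (fun i => (i + j + 2, i + j + 2))
noncomputable def Zj (j : ℕ) : R2 := P (fun i => (i + j + 2, i + j + 1))

theorem Yj_succ (j : ℕ) : Yj (j + 1) = Yj j - mon (j, j + 1) * Yj j := by
  have := P_peel (w := fun i => (i + j, i + j + 1)) (fun i => by simp; omega)
  simp only [zero_add] at this
  rw [Yj, Yj, ← this]
  congr 1; ext i <;> simp <;> ring

theorem Qj_succ (j : ℕ) : Qj (j + 1) = Qj j - mon (j + 2, j + 2) * Qj j := by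
  have := P_peel (w := fun i => (i + j + 2, i + j + 2)) (fun i => by simp; omega)
  simp only [zero_add] at this
  rw [Qj, Qj, ← this]
  congr 1; ext i <;> simp <;> ring

theorem Zj_succ (j : ℕ) : Zj (j + 1) = Zj j - mon (j + 2, j + 1) * Zj j := by
  have := P_peel (w := fun i => (i + j + 2, i + j + 1)) (fun i => by simp; omega)
  simp only [zero_add] at this
  rw [Zj, Zj, ← this]
  congr 1; ext i <;> simp <;> ring

theorem Z_eq : Zj 0 = gf {p : ℕ × (ℕ →₀ ℕ) | p.1 = 0} (wtH 0) := by
  refine gf_inv (fun c => (0, c)) (fun p => p.2) ?_ ?_ ?_ ?_ ?_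
  · intro _ _; rfl
  · intro _ _; trivial
  · intro _ _; rfl
  · rintro ⟨k, c⟩ h
    simp only [Set.mem_ofPred_eq] at h
    rw [h]
  · intro c _
    simp only [wtH, zero_smul, zero_add]
    exact W_congr fun i _ => by simp [wk]

theorem H_cong (j : ℕ) : Cong j (H j) (Zj 0) := by
  rw [Z_eq, H]
  refine gf_cong ?_ ?_
  · rintro ⟨k, c⟩ h _
    have : k = 0 := by
      by_contra hk
      have : 1 ≤ k := by omega
      simp only [wtH, Prod.fst_add, Prod.snd_add, Prod.smul_fst, Prod.smul_snd, smul_eq_mul] at h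
      nlinarith
    subst this
    exact ⟨rfl, by simp [wtH]⟩
  · rintro ⟨k, c⟩ _ h
    simp only [Set.mem_ofPred_eq] at h
    subst h
    exact ⟨trivial, by simp [wtH]⟩

theorem H_eq : H 0 * Qj 0 = Yj 0 * Zj 0 := by
  rw [← sub_eq_zero]
  refine vanish (fun j => H j * Qj j - Yj j * Zj 0) (fun j => (j, j + 1)) (fun j => by simp) ?_ ?_ 0
  · intro j
    have h1 := H_rec j
    simp only [Yj_succ, Qj_succ]
    linear_combination (-Qj j) * h1
  · intro j m n hmn
    rw [cf_sub, sub_eq_zero]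
    have a := (H_cong j).mul (P_cong_one (w := fun i => (i + j + 2, i + j + 2)) (j := j)
      (fun i => by simp; omega)) m n hmn
    have b := Cong.mul (P_cong_one (w := fun i => (i + j, i + j + 1)) (j := j)
      (fun i => by simp; omega)) (fun _ _ _ => rfl : Cong j (Zj 0) (Zj 0)) m n hmn
    rw [mul_one] at a
    rw [one_mul] at b
    exact a.trans b.symm

/-! ### Euler's identity and the crank -/

noncomputable def wtE (j : ℕ) (p : ℕ × (ℕ →₀ ℕ)) : ℕ × ℕ := p.1 • (j + 2, j + 1) + W qq p.2

def BE : Set (ℕ × (ℕ →₀ ℕ)) := {p | ∀ i, p.1 ≤ i → p.2 i = 0}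

theorem mem_BE (p : ℕ × (ℕ →₀ ℕ)) : p ∈ BE ↔ ∀ i, p.1 ≤ i → p.2 i = 0 := Iff.rfl

theorem FinW_E (j : ℕ) (A : Set (ℕ × (ℕ →₀ ℕ))) : FinW A (wtE j) := by
  refine FinW_pair.mono (Set.subset_univ _) ?_
  rintro ⟨k, c⟩ _
  simp only [wtE, Prod.fst_add, Prod.snd_add, Prod.smul_fst, Prod.smul_snd, smul_eq_mul]
  nlinarith

noncomputable def E (j : ℕ) : R2 := gf BE (wtE j)

theorem addTop_BE {p : ℕ × (ℕ →₀ ℕ)} (hp : p ∈ BE) : addTop p ∈ BE := by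
  obtain ⟨k, c⟩ := p
  intro i hi
  have := hp i hi
  simp only [addTop] at hi this ⊢
  split_ifs with h
  · exact this
  · rw [Finsupp.add_apply, this, Finsupp.single_apply, if_neg (by omega), add_zero]

theorem subTop_BE {p : ℕ × (ℕ →₀ ℕ)} (hp : p ∈ BE) : subTop p ∈ BE := by
  obtain ⟨k, c⟩ := p
  intro i hi
  have := hp i hi
  simp only [subTop] at hi this ⊢
  split_ifs with h
  · exact this
  · rw [Finsupp.tsub_apply, this, zero_tsub]

theorem addTop_prop (p : ℕ × (ℕ →₀ ℕ)) :
    (addTop p).1 = 0 ∨ (addTop p).2 ((addTop p).1 - 1) ≠ 0 := by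
  obtain ⟨k, c⟩ := p
  by_cases h : k = 0 <;> simp [addTop, h]

theorem W_qq_addTop (p : ℕ × (ℕ →₀ ℕ)) : W qq (addTop p).2 = W qq p.2 + (p.1, p.1) := by
  obtain ⟨k, c⟩ := p
  by_cases h : k = 0
  · simp [addTop, h]
  · simp only [addTop, h, if_false, W_add, W_single, one_smul]
    congr 1
    ext <;> simp [qq] <;> omega

theorem wtE_addTop (j : ℕ) (p : ℕ × (ℕ →₀ ℕ)) : wtE j (addTop p) = wtE (j + 1) p := by
  rw [wtE, W_qq_addTop, wtE]
  ext <;> simp [addTop] <;> ring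

theorem E_rec (j : ℕ) : E j = E (j + 1) + mon (j + 2, j + 1) * E j := by
  have e1 : gf {p | p ∈ BE ∧ (p.1 = 0 ∨ p.2 (p.1 - 1) ≠ 0)} (wtE j) = E (j + 1) := by
    refine gf_inv subTop addTop ?_ ?_ ?_ ?_ ?_
    · intro p hp; exact subTop_BE hp.1
    · intro p hp; exact ⟨addTop_BE hp, addTop_prop p⟩
    · intro p hp; exact addTop_subTop p hp.2
    · intro p _; exact subTop_addTop p
    · intro p hp
      rw [← wtE_addTop, addTop_subTop p hp.2]
  have e2 : gf {p | p ∈ BE ∧ ¬ (p.1 = 0 ∨ p.2 (p.1 - 1) ≠ 0)} (wtE j) =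
      mon (j + 2, j + 1) * E j := by
    rw [E, mon_mul_gf (FinW_E j _)]
    symm
    refine gf_inv (fun p => (p.1 + 1, p.2)) (fun p => (p.1 - 1, p.2)) ?_ ?_ ?_ ?_ ?_
    · rintro ⟨k, c⟩ h
      refine ⟨fun i hi => h i (by simp at hi ⊢; omega), ?_⟩
      simpa using h k le_rfl
    · rintro ⟨k, c⟩ ⟨h1, h⟩
      simp only [not_or, not_not] at h
      intro i hi
      simp only at hi
      by_cases hik : i = k - 1
      · rw [hik]; exact h.2
      · exact h1 i (by simp only; omega)
    · rintro ⟨k, c⟩ _; rfl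
    · rintro ⟨k, c⟩ ⟨_, h⟩
      simp only [not_or, not_not] at h
      ext <;> simp; omega
    · rintro ⟨k, c⟩ _
      simp only [wtE]
      ext <;> simp <;> ring
  conv_lhs => rw [E, gf_split (FinW_E j _) (fun p => p.1 = 0 ∨ p.2 (p.1 - 1) ≠ 0), e1, e2]

theorem E_cong (j : ℕ) : Cong j (E j) 1 := by
  rw [← mon_zero]
  have : mon 0 = gf {((0 : ℕ), (0 : ℕ →₀ ℕ))} (wtE j) := by
    refine gf_inv (fun _ => (0, 0)) (fun _ => ()) ?_ ?_ ?_ ?_ ?_ <;> simp [W_zero, wtE]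
  rw [this, E]
  refine gf_cong ?_ ?_
  · rintro ⟨k, c⟩ h hB
    have : k = 0 := by
      by_contra hk
      have : 1 ≤ k := by omega
      simp only [wtE, Prod.fst_add, Prod.snd_add, Prod.smul_fst, Prod.smul_snd, smul_eq_mul] at h
      nlinarith
    subst this
    have : c = 0 := by ext i; exact hB i (Nat.zero_le _)
    rw [this]
    exact ⟨rfl, rfl⟩
  · rintro p _ h
    rw [Set.mem_singleton_iff] at h
    subst h
    exact ⟨fun i _ => rfl, rfl⟩

theorem E_eq : E 0 = Zj 0 := by
  rw [← sub_eq_zero]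
  refine vanish (fun j => E j - Zj j) (fun j => (j + 2, j + 1)) (fun j => by simp) ?_ ?_ 0
  · intro j
    have h1 := E_rec j
    simp only [Zj_succ]
    linear_combination -h1
  · intro j m n hmn
    rw [cf_sub, sub_eq_zero, E_cong j m n hmn]
    exact (P_cong_one (fun i => by simp; omega) m n hmn).symm

/-- largest part, where `c i` is the multiplicity of the part `i + 1` -/
def topPart (c : ℕ →₀ ℕ) : ℕ := c.support.sup (fun i => i + 1)

theorem topPart_BE (c : ℕ →₀ ℕ) : (topPart c, c) ∈ BE := by
  intro i hi
  simp only at hi ⊢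
  by_contra h
  have : i + 1 ≤ topPart c := Finset.le_sup (f := fun i => i + 1) (by simpa using h)
  omega

theorem topPart_prop (c : ℕ →₀ ℕ) : topPart c = 0 ∨ c (topPart c - 1) ≠ 0 := by
  by_cases h : c.support.Nonempty
  · right
    obtain ⟨i, hi, hi'⟩ := Finset.exists_mem_eq_sup _ h (fun i => i + 1)
    rw [topPart, hi']
    simpa using hi
  · left
    rw [Finset.not_nonempty_iff_eq_empty] at h
    simp [topPart, h]

theorem topPart_unique {c : ℕ →₀ ℕ} {k : ℕ} (h1 : (k, c) ∈ BE) (h2 : k = 0 ∨ c (k - 1) ≠ 0) :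
    topPart c = k := by
  have a := topPart_BE c
  have b := topPart_prop c
  rcases lt_trichotomy (topPart c) k with h | h | h
  · exact absurd (a (k - 1) (by simp only; omega)) (h2.resolve_left (by omega))
  · exact h
  · exact absurd (h1 (topPart c - 1) (by simp only; omega)) (b.resolve_left (by omega))

noncomputable def wtL (c : ℕ →₀ ℕ) : ℕ × ℕ := W qq c + (topPart c, 0)

noncomputable def L : R2 := gf Set.univ wtL

theorem FinW_L (A : Set (ℕ →₀ ℕ)) : FinW A wtL :=
  (FinW_W qq_good).mono (Set.subset_univ _) fun c _ => by
    simp only [wtL, Prod.fst_add, Prod.snd_add]; omega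

theorem L_eq : L = Zj 0 := by
  rw [← E_eq]
  symm
  have ht : ∀ p ∈ BE, topPart (addTop p).2 = p.1 := fun p hp =>
    topPart_unique (k := p.1) (c := (addTop p).2) (addTop_BE hp) (addTop_prop p)
  refine gf_inv (fun p => (addTop p).2) (fun c => subTop (topPart c, c)) ?_ ?_ ?_ ?_ ?_
  · intro _ _; trivial
  · intro c _; exact subTop_BE (topPart_BE c)
  · intro p hp
    rw [ht p hp]
    exact subTop_addTop p
  · intro c _
    rw [addTop_subTop _ (topPart_prop c)]
  · intro p hp
    simp only [wtL]
    rw [ht p hp, W_qq_addTop, wtE]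
    ext <;> simp <;> ring

theorem topPart_zero : topPart 0 = 0 := by simp [topPart]

theorem topPart_add_one {c : ℕ →₀ ℕ} (hc : c ≠ 0) : topPart (c + Finsupp.single 0 1) = topPart c := by
  refine topPart_unique ?_ ?_
  · intro i hi
    have := topPart_BE c i hi
    simp only at this hi ⊢
    have h0 : topPart c ≠ 0 := by
      intro h0
      apply hc
      ext j
      exact topPart_BE c j (by simp only; omega)
    rw [Finsupp.add_apply, this, Finsupp.single_apply, if_neg (by omega), add_zero]
  · refine (topPart_prop c).imp id fun h => ?_
    rw [Finsupp.add_apply]; omega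

theorem L_peel : gf {c : ℕ →₀ ℕ | c 0 = 0} wtL = L - mon (1, 1) * L + mon (1, 1) - mon (2, 1) := by
  have e0 : L = gf {c : ℕ →₀ ℕ | c 0 = 0} wtL + gf {c : ℕ →₀ ℕ | c 0 ≠ 0} wtL := by
    rw [L, gf_split (FinW_L _) (fun c => c 0 = 0)]
    simp
  have e1 : gf {c : ℕ →₀ ℕ | c 0 ≠ 0} wtL = mon (2, 1) +
      gf {c : ℕ →₀ ℕ | c 0 ≠ 0 ∧ c ≠ Finsupp.single 0 1} wtL := by
    rw [gf_split (FinW_L _) (fun c => c = Finsupp.single 0 1)]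
    congr 1
    symm
    refine gf_inv (fun _ => Finsupp.single 0 1) (fun _ => ()) ?_ ?_ ?_ ?_ ?_
    · intro _ _; simp
    · intro _ _; trivial
    · intro _ _; rfl
    · intro c hc; exact hc.2.symm
    · intro _ _
      have : topPart (Finsupp.single 0 1) = 1 := by
        refine topPart_unique ?_ ?_
        · intro i hi
          simp only at hi ⊢
          rw [Finsupp.single_apply, if_neg (by omega)]
        · simp
      simp [wtL, this, W_single, qq]
  have e2 : L = 1 + gf {c : ℕ →₀ ℕ | c ≠ 0} wtL := by
    rw [L, gf_split (FinW_L _) (fun c => c = 0)]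
    congr 1
    · rw [← mon_zero]
      symm
      refine gf_inv (fun _ => 0) (fun _ => ()) ?_ ?_ ?_ ?_ ?_
      · intro _ _; simp
      · intro _ _; trivial
      · intro _ _; rfl
      · intro c hc; exact hc.2.symm
      · intro _ _; simp [wtL, topPart_zero, W_zero]
    · simp
  have e3 : gf {c : ℕ →₀ ℕ | c 0 ≠ 0 ∧ c ≠ Finsupp.single 0 1} wtL =
      mon (1, 1) * gf {c : ℕ →₀ ℕ | c ≠ 0} wtL := by
    rw [mon_mul_gf (FinW_L _)]
    symm
    refine gf_inv (fun c => c + Finsupp.single 0 1) (fun c => c - Finsupp.single 0 1) ?_ ?_ ?_ ?_ ?_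
    · intro c hc
      refine ⟨by simp, fun h => hc ?_⟩
      simpa using h
    · rintro c ⟨h1, h2⟩ h3
      apply h2
      rw [← sub_single_add h1, h3, zero_add]
    · intro c _; simp
    · rintro c ⟨h1, h2⟩; exact sub_single_add h1
    · intro c hc
      simp only [wtL, topPart_add_one hc, W_add, W_single]
      ext <;> simp [qq]
      ring
  rw [e1, e3] at e0
  linear_combination -e0 + mon (1, 1) * e2

noncomputable def wtK (c : ℕ →₀ ℕ) : ℕ × ℕ :=
  if c 0 = 0 then wtL c else (0, c 0) + W (wk (c 0)) (c.erase 0)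

theorem FinW_K (A : Set (ℕ →₀ ℕ)) : FinW A wtK := by
  refine (FinW_W (w := fun i => (0, i + 1)) (fun i => by simp)).mono (Set.subset_univ _) fun c _ => ?_
  unfold wtK
  split_ifs with h
  · simp only [wtL, Prod.fst_add, Prod.snd_add]
    have := W_deg_mono (w := fun i => (0, i + 1)) (w' := qq) (fun i => by simp [qq]) c
    omega
  · have := W_deg_mono (w := fun i => (0, i + 1)) (w' := wk (c 0))
      (fun i => by unfold wk; split_ifs <;> simp) (c.erase 0)
    have h2 : W (fun i => (0, i + 1)) c = (0, c 0) + W (fun i => (0, i + 1)) (c.erase 0) := by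
      conv_lhs => rw [← Finsupp.single_add_erase 0 c, W_add, W_single]
      simp
    rw [h2]
    simp only [Prod.fst_add, Prod.snd_add] at this ⊢
    omega

theorem Kb_eq : gf {c : ℕ →₀ ℕ | c 0 ≠ 0} wtK =
    gf {p : ℕ × (ℕ →₀ ℕ) | p.1 ≠ 0} (wtH 0) - mon (1, 1) * gf {p | p.1 ≠ 0} (wtH 0) := by
  rw [eq_sub_iff_add_eq, mon_mul_gf (FinW_H 0 _)]
  conv_rhs => rw [gf_split (FinW_H 0 _) (fun p => p.2 0 = 0)]
  congr 1
  · symm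
    refine gf_inv (fun p => p.2 + Finsupp.single 0 p.1) (fun c => (c 0, c.erase 0)) ?_ ?_ ?_ ?_ ?_
    · rintro ⟨k, c⟩ ⟨h1, h2⟩
      simp only [Set.mem_ofPred_eq] at h1
      simp [h1]
    · intro c hc; exact ⟨hc, by simp⟩
    · rintro ⟨k, c⟩ ⟨h1, h2⟩
      simp only [] at h2
      ext i
      · simp [h2]
      · by_cases hi : i = 0
        · simp [hi, h2]
        · simp [hi]
    · intro c _; simp [Finsupp.erase_add_single]
    · rintro ⟨k, c⟩ ⟨h1, h2⟩
      simp only [Set.mem_ofPred_eq] at h1 h2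
      have e : (c + Finsupp.single 0 k).erase 0 = c := by
        ext i
        by_cases hi : i = 0
        · simp [hi, h2]
        · simp [hi]
      have e' : (c + Finsupp.single 0 k : ℕ →₀ ℕ) 0 = k := by simp [h2]
      simp only [wtK, e, e', h1, if_false, wtH]
      simp
  · refine gf_inv (fun p => (p.1, p.2 + Finsupp.single 0 1))
      (fun p => (p.1, p.2 - Finsupp.single 0 1)) ?_ ?_ ?_ ?_ ?_
    · intro p hp; exact ⟨hp, by simp⟩
    · intro p hp; exact hp.1
    · intro p _; simp
    · rintro ⟨k, c⟩ ⟨h1, h2⟩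
      simp only [sub_single_add h2]
    · rintro ⟨k, c⟩ h1
      simp only [Set.mem_ofPred_eq] at h1
      have : wk k 0 = (1, 1) := by unfold wk; rw [if_pos (by omega)]
      simp only [wtH, W_add, W_single, this, one_smul, add_assoc]

noncomputable def KK : R2 := gf Set.univ wtK - mon (1, 1) + mon (2, 1)

theorem KK_eq : KK = H 0 - mon (1, 1) * H 0 := by
  have e1 : gf Set.univ wtK = gf {c : ℕ →₀ ℕ | c 0 = 0} wtL + gf {c : ℕ →₀ ℕ | c 0 ≠ 0} wtK := by
    rw [gf_split (FinW_K _) (fun c => c 0 = 0)]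
    congr 1
    · refine gf_inv id id ?_ ?_ ?_ ?_ ?_
      · intro c hc; exact hc.2
      · intro c hc; exact ⟨trivial, hc⟩
      · intro _ _; rfl
      · intro _ _; rfl
      · intro c hc; simp [wtK, hc.2]
    · simp
  have e2 : H 0 = Zj 0 + gf {p : ℕ × (ℕ →₀ ℕ) | p.1 ≠ 0} (wtH 0) := by
    rw [Z_eq, H, gf_split (FinW_H 0 _) (fun p => p.1 = 0)]
    simp
  rw [KK, e1, Kb_eq, L_peel, L_eq, e2]
  ring

theorem KK_mul : KK * P qq = Yj 0 * Zj 0 := by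
  rw [← H_eq, KK_eq]
  have := P_peel qq_good
  have h2 : Qj 0 = P (fun i => qq (i + 1)) := rfl
  rw [h2, this, show qq 0 = (1, 1) from rfl]
  ring

/-! ### Steadily decreasing pairs -/

theorem FinW.of_inj {S T : Type*} {A : Set S} {B : Set T} {wt : S → ℕ × ℕ} {wt' : T → ℕ × ℕ}
    (h : FinW B wt') (f : S → T) (hf : ∀ s ∈ A, f s ∈ B) (hi : Set.InjOn f A)
    (hw : ∀ s ∈ A, wt' (f s) = wt s) : FinW A wt := by
  intro N
  refine Set.Finite.of_injOn (f := f) ?_ (hi.mono Set.inter_subset_left) (h N)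
  rintro s ⟨hs, hN⟩
  refine ⟨hf s hs, ?_⟩
  simp only [Set.mem_ofPred_eq] at hN ⊢
  rw [hw s hs]; exact hN

/-- `Tl δ i = ∑_{k > i} δ k` -/
noncomputable def Tl (δ : ℕ →₀ ℕ) : ℕ →₀ ℕ :=
  Finsupp.linearCombination ℕ (fun k => ∑ i ∈ Finset.range k, Finsupp.single i 1) δ

theorem Tl_add (c d : ℕ →₀ ℕ) : Tl (c + d) = Tl c + Tl d := by simp [Tl]
theorem Tl_zero : Tl 0 = 0 := by simp [Tl]
theorem Tl_single (k a : ℕ) : Tl (Finsupp.single k a) =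
    a • ∑ i ∈ Finset.range k, Finsupp.single i 1 := by simp [Tl]

theorem Tl_single_apply (k a i : ℕ) : Tl (Finsupp.single k a) i = if i < k then a else 0 := by
  rw [Tl_single]
  simp [Finsupp.single_apply]

theorem Tl_succ (c : ℕ →₀ ℕ) (i : ℕ) : Tl c i = Tl c (i + 1) + c (i + 1) := by
  induction c using Finsupp.induction_linear with
  | zero => simp [Tl_zero]
  | add f g hf hg => simp only [Tl_add, Finsupp.add_apply, hf, hg]; ring
  | single k a =>
    rw [Tl_single_apply, Tl_single_apply, Finsupp.single_apply]
    split_ifs <;> omega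

theorem Tl_unique (M δ : ℕ →₀ ℕ) (h : ∀ i, M i = M (i + 1) + δ i) (i : ℕ) : Tl δ i = M (i + 1) := by
  have key : ∀ k, Tl δ i + M (i + k + 1) = M (i + 1) + Tl δ (i + k) := by
    intro k
    induction k with
    | zero => simp [add_comm]
    | succ k ih =>
      have h1 := h (i + k + 1)
      have h2 := Tl_succ δ (i + k)
      have e : i + (k + 1) = i + k + 1 := by ring
      rw [e]
      omega
  have ev : ∀ f : ℕ →₀ ℕ, ∃ N, ∀ n, N ≤ n → f n = 0 := fun f =>
    ⟨topPart f, fun n hn => topPart_BE f n hn⟩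
  obtain ⟨N1, h1⟩ := ev M
  obtain ⟨N2, h2⟩ := ev (Tl δ)
  have := key (N1 + N2)
  rw [h1 (i + (N1 + N2) + 1) (by omega), h2 (i + (N1 + N2)) (by omega)] at this
  simpa using this

def uu (i : ℕ) : ℕ × ℕ := (i + 1, i)
def vv (i : ℕ) : ℕ × ℕ := (i, i + 1)
def odd (i : ℕ) : ℕ × ℕ := (2 * i + 1, 2 * i + 1)
def evn (i : ℕ) : ℕ × ℕ := (2 * i + 2, 2 * i + 2)

theorem uu_good : Good uu := by intro i; simp [uu]
theorem vv_good : Good vv := by intro i; simp [vv]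
theorem odd_good : Good odd := by intro i; simp [odd]; omega
theorem evn_good : Good evn := by intro i; simp [evn]; omega

def size (c : ℕ →₀ ℕ) : ℕ := c.sum fun _ x => x

theorem size_add (c d : ℕ →₀ ℕ) : size (c + d) = size c + size d := by
  unfold size; exact Finsupp.sum_add_index' (fun _ => rfl) (fun _ _ _ => rfl)

theorem size_single (i a : ℕ) : size (Finsupp.single i a) = a := by simp [size]
theorem size_zero : size 0 = 0 := by simp [size]
theorem size_sum {ι : Type*} (s : Finset ι) (f : ι → ℕ →₀ ℕ) :
    size (∑ i ∈ s, f i) = ∑ i ∈ s, size (f i) := by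
  classical
  induction s using Finset.induction_on with
  | empty => simp [size_zero]
  | insert a s ha ih => rw [Finset.sum_insert ha, Finset.sum_insert ha, size_add, ih]

theorem size_Tl_single (k a : ℕ) : size (Tl (Finsupp.single k a)) = a * k := by
  rw [Tl_single, Finset.smul_sum, size_sum]
  simp [size_single, mul_comm]

theorem W_size (c : ℕ →₀ ℕ) : W uu c = (size c + size (Tl c), size (Tl c)) ∧
    W vv c = (size (Tl c), size c + size (Tl c)) ∧
    W qq c = (size c + size (Tl c), size c + size (Tl c)) := by
  induction c using Finsupp.induction_linear with
  | zero => simp [W_zero, size_zero, Tl_zero, Prod.ext_iff]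
  | add f g hf hg =>
    obtain ⟨h1, h2, h3⟩ := hf
    obtain ⟨h4, h5, h6⟩ := hg
    rw [W_add, W_add, W_add, h1, h2, h3, h4, h5, h6, Tl_add, size_add, size_add]
    refine ⟨?_, ?_, ?_⟩ <;> ext <;> simp <;> ring
  | single k a =>
    simp only [W_single, size_Tl_single, size_single, uu, vv, qq]
    refine ⟨?_, ?_, ?_⟩ <;> ext <;> simp <;> ring

abbrev Tr := ((ℕ →₀ ℕ) × (ℕ →₀ ℕ)) × (ℕ →₀ ℕ)

noncomputable def wt3 (t : Tr) : ℕ × ℕ := (W uu t.1.1 + W vv t.1.2) + W qq t.2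

theorem FinW_3 : FinW Set.univ wt3 := by
  have := ((FinW_W uu_good).prod (FinW_W vv_good)).prod (FinW_W qq_good)
  rwa [Set.univ_prod_univ, Set.univ_prod_univ] at this

theorem gf_3 : gf Set.univ wt3 = P uu * P vv * P qq := by
  rw [P, P, P, gf_mul (FinW_W uu_good) (FinW_W vv_good),
    gf_mul ((FinW_W uu_good).prod (FinW_W vv_good)) (FinW_W qq_good), Set.univ_prod_univ,
    Set.univ_prod_univ]
  rfl

noncomputable def wtF (p : (ℕ →₀ ℕ) × (ℕ →₀ ℕ)) : ℕ × ℕ := (size p.1, size p.2)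

def SD : Set ((ℕ →₀ ℕ) × (ℕ →₀ ℕ)) := {p |
    (∀ i, p.1 (i + 1) ≤ p.1 i) ∧ (∀ i, p.2 (i + 1) ≤ p.2 i) ∧
    SteadilyDecreasing p.1 p.2}

theorem mem_SD (p : (ℕ →₀ ℕ) × (ℕ →₀ ℕ)) : p ∈ SD ↔
    ∀ i, p.1 (i + 1) ≤ p.1 i ∧ p.2 (i + 1) ≤ p.2 i ∧ p.1 (i + 1) ≤ p.2 i ∧ p.2 (i + 1) ≤ p.1 i := by
  simp only [SD, SteadilyDecreasing, Set.mem_ofPred_eq]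
  constructor
  · rintro ⟨h1, h2, h3⟩ i
    have := h3 i
    simp only [le_min_iff, max_le_iff] at this
    omega
  · intro h
    refine ⟨fun i => (h i).1, fun i => (h i).2.1, fun i => ?_⟩
    have := h i
    simp only [le_min_iff, max_le_iff]
    omega

noncomputable def FF : R2 := gf SD wtF

def A3 : Set Tr := {t | ∀ i, t.1.1 i = 0 ∨ t.1.2 i = 0}

noncomputable def Phi (t : Tr) : (ℕ →₀ ℕ) × (ℕ →₀ ℕ) :=
  (t.2 + t.1.1 + Tl (t.2 + t.1.1 + t.1.2), t.2 + t.1.2 + Tl (t.2 + t.1.1 + t.1.2))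

noncomputable def Psi (p : (ℕ →₀ ℕ) × (ℕ →₀ ℕ)) : Tr :=
  ((p.1 - p.2, p.2 - p.1),
    (p.1 ⊓ p.2) - (p.1 ⊔ p.2).comapDomain Nat.succ Nat.succ_injective.injOn)

theorem Psi_e (p : (ℕ →₀ ℕ) × (ℕ →₀ ℕ)) (i : ℕ) : (Psi p).2 i =
    min (p.1 i) (p.2 i) - max (p.1 (i + 1)) (p.2 (i + 1)) := by
  simp [Psi, Finsupp.inf_apply, Finsupp.sup_apply]

theorem Psi_mem (p : (ℕ →₀ ℕ) × (ℕ →₀ ℕ)) : Psi p ∈ A3 := by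
  intro i
  simp [Psi]
  omega

theorem Phi_wt (t : Tr) : wtF (Phi t) = wt3 t := by
  obtain ⟨⟨p, r⟩, e⟩ := t
  simp only [wt3, Phi, wtF, (W_size p).1, (W_size r).2.1, (W_size e).2.2, size_add, Tl_add]
  ext <;> simp <;> ring

theorem Phi_mem (t : Tr) : Phi t ∈ SD := by
  obtain ⟨⟨p, r⟩, e⟩ := t
  rw [mem_SD]
  intro i
  have := Tl_succ (e + p + r) i
  simp only [Phi, Finsupp.add_apply] at this ⊢
  omega

theorem Psi_Phi (t : Tr) (ht : t ∈ A3) : Psi (Phi t) = t := by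
  obtain ⟨⟨p, r⟩, e⟩ := t
  have h3 : (Psi (Phi ((p, r), e))).2 = e := by
    ext i
    rw [Psi_e]
    have := Tl_succ (e + p + r) i
    have h1 := ht i
    have h2 := ht (i + 1)
    simp only [Phi, Finsupp.add_apply] at this h1 h2 ⊢
    omega
  refine Prod.ext (Prod.ext ?_ ?_) h3
  · ext i
    have h1 := ht i
    simp only [Psi, Phi, Finsupp.add_apply, Finsupp.tsub_apply] at h1 ⊢
    omega
  · ext i
    have h1 := ht i
    simp only [Psi, Phi, Finsupp.add_apply, Finsupp.tsub_apply] at h1 ⊢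
    omega

theorem Phi_Psi (p : (ℕ →₀ ℕ) × (ℕ →₀ ℕ)) (hp : p ∈ SD) : Phi (Psi p) = p := by
  rw [mem_SD] at hp
  have key : ∀ i, Tl ((Psi p).2 + (Psi p).1.1 + (Psi p).1.2) i = (p.1 ⊔ p.2) (i + 1) := by
    refine Tl_unique _ _ fun i => ?_
    have := hp i
    rw [Finsupp.add_apply, Finsupp.add_apply, Psi_e]
    simp only [Psi, Finsupp.tsub_apply, Finsupp.sup_apply]
    omega
  refine Prod.ext ?_ ?_
  · ext i
    have := hp i
    simp only [Phi]
    rw [Finsupp.add_apply, Finsupp.add_apply, key, Psi_e]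
    simp only [Psi, Finsupp.tsub_apply, Finsupp.sup_apply]
    omega
  · ext i
    have := hp i
    simp only [Phi]
    rw [Finsupp.add_apply, Finsupp.add_apply, key, Psi_e]
    simp only [Psi, Finsupp.tsub_apply, Finsupp.sup_apply]
    omega

theorem FF_eq : FF = gf A3 wt3 :=
  (gf_inv Phi Psi (fun t _ => Phi_mem t) (fun p _ => Psi_mem p) Psi_Phi Phi_Psi
    (fun t _ => Phi_wt t)).symm

theorem FinW_A3 : FinW A3 wt3 := FinW_3.mono (Set.subset_univ _) fun _ _ => le_rfl

theorem FinW_F : FinW SD wtF :=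
  FinW_A3.of_inj Psi (fun p _ => Psi_mem p)
    (fun p hp q hq h => by rw [← Phi_Psi p hp, h, Phi_Psi q hq])
    (fun p hp => by rw [← Phi_wt, Phi_Psi p hp])

theorem FF_odd : FF * P odd = P uu * P vv * P qq := by
  rw [FF_eq, P, gf_mul FinW_A3 (FinW_W odd_good), ← gf_3]
  refine gf_inv (fun s => ((s.1.1.1 + s.2, s.1.1.2 + s.2), s.1.2))
    (fun t => (((t.1.1 - t.1.1 ⊓ t.1.2, t.1.2 - t.1.1 ⊓ t.1.2), t.2), t.1.1 ⊓ t.1.2)) ?_ ?_ ?_ ?_ ?_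
  · intro _ _; trivial
  · rintro ⟨⟨u, v⟩, e⟩ _
    refine ⟨fun i => ?_, trivial⟩
    simp only [Finsupp.tsub_apply, Finsupp.inf_apply]
    omega
  · rintro ⟨⟨⟨u, v⟩, e⟩, g⟩ ⟨h, _⟩
    have e1 : (u + g) ⊓ (v + g) = g := by
      ext i
      have := h i
      simp only [Finsupp.add_apply, Finsupp.inf_apply] at this ⊢
      omega
    simp only [e1, add_tsub_cancel_right]
  · rintro ⟨⟨u, v⟩, e⟩ _
    simp only [tsub_add_cancel_of_le (inf_le_left : u ⊓ v ≤ u),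
      tsub_add_cancel_of_le (inf_le_right : u ⊓ v ≤ v)]
  · rintro ⟨⟨⟨u, v⟩, e⟩, g⟩ _
    have : W odd g = W uu g + W vv g := by
      rw [← W_weight_add]
      refine W_congr fun i _ => ?_
      ext <;> simp [odd, uu, vv] <;> ring
    simp only [wt3, this, W_add]
    ac_rfl

theorem P_odd_evn : P qq = P odd * P evn := by
  rw [P, P, P, gf_mul (FinW_W odd_good) (FinW_W evn_good)]
  have i1 : Function.Injective (fun i : ℕ => 2 * i) := fun a b h => by simpa using h
  have i2 : Function.Injective (fun i : ℕ => 2 * i + 1) := fun a b h => by simpa using h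
  have n1 : ∀ i, 2 * i + 1 ∉ Set.range (fun i : ℕ => 2 * i) := by
    rintro i ⟨j, hj⟩; simp only at hj; omega
  have n2 : ∀ i, 2 * i ∉ Set.range (fun i : ℕ => 2 * i + 1) := by
    rintro i ⟨j, hj⟩; simp only at hj; omega
  have a1 : ∀ (c d : ℕ →₀ ℕ) i, (c.mapDomain (fun i : ℕ => 2 * i) +
      d.mapDomain (fun i : ℕ => 2 * i + 1)) (2 * i) = c i := by
    intro c d i
    rw [Finsupp.add_apply, Finsupp.mapDomain_of_notMem_range _ _ (n2 i), add_zero]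
    exact Finsupp.mapDomain_apply i1 c i
  have a2 : ∀ (c d : ℕ →₀ ℕ) i, (c.mapDomain (fun i : ℕ => 2 * i) +
      d.mapDomain (fun i : ℕ => 2 * i + 1)) (2 * i + 1) = d i := by
    intro c d i
    rw [Finsupp.add_apply, Finsupp.mapDomain_of_notMem_range _ _ (n1 i), zero_add]
    exact Finsupp.mapDomain_apply i2 d i
  symm
  refine gf_inv
    (fun p => p.1.mapDomain (fun i : ℕ => 2 * i) + p.2.mapDomain (fun i : ℕ => 2 * i + 1))
    (fun c => (c.comapDomain (fun i : ℕ => 2 * i) i1.injOn,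
      c.comapDomain (fun i : ℕ => 2 * i + 1) i2.injOn)) ?_ ?_ ?_ ?_ ?_
  · intro _ _; trivial
  · intro _ _; exact ⟨trivial, trivial⟩
  · rintro ⟨c, d⟩ _
    refine Prod.ext ?_ ?_
    · ext i; rw [Finsupp.comapDomain_apply]; exact a1 c d i
    · ext i; rw [Finsupp.comapDomain_apply]; exact a2 c d i
  · intro c _
    ext i
    rcases Nat.even_or_odd' i with ⟨k, rfl | rfl⟩
    · rw [a1, Finsupp.comapDomain_apply]
    · rw [a2, Finsupp.comapDomain_apply]
  · rintro ⟨c, d⟩ _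
    rw [W_add, W, W, Finsupp.linearCombination_mapDomain, Finsupp.linearCombination_mapDomain]
    rfl

theorem P_odd_ne : P odd ≠ 0 := by
  intro h
  have := (P_cong_one (w := odd) (j := 1) (fun i => by simp [odd]; omega)) 0 0 (by omega)
  rw [h, cf_zero, cf_one] at this
  simp at this

theorem FF_prod : FF = P uu * P vv * P evn := by
  apply mul_right_cancel₀ P_odd_ne
  rw [FF_odd, P_odd_evn]; ring

theorem FF_diff : FF - mon (1, 0) * FF = Zj 0 * Yj 0 * P evn := by
  have h := P_peel uu_good
  have h1 : Zj 0 = P (fun i => uu (i + 1)) := rfl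
  have h2 : Yj 0 = P vv := rfl
  rw [h1, h2, h, FF_prod, show uu 0 = (1, 0) from rfl]
  ring

theorem cf_FF (m n : ℕ) : cf FF m n = bipartitePi m n := by
  rw [FF, cf_gf, bipartitePi, ← Nat.card_coe_set_eq, Nat.cast_inj]
  refine Nat.card_congr (Equiv.subtypeEquivRight fun p => ?_)
  simp only [SD, wtF, size, Set.mem_inter_iff, Set.mem_ofPred_eq, Set.mem_preimage,
    Set.mem_singleton_iff, Prod.mk.injEq]
  tauto

theorem cf_FF_diff (m n : ℕ) : cf (FF - mon (1, 0) * FF) m n = Dbip m n := by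
  rw [cf_sub, cf_mon_mul, cf_FF, Dbip]
  by_cases h : m = 0
  · simp [h]
  · simp [h, cf_FF, show 1 ≤ m by omega]

/-! ### Multisets: cubic partitions and the crank -/

theorem sum_map_toMultiset (f : ℕ → ℕ) (c : ℕ →₀ ℕ) :
    W (fun i => (f i, f i)) c =
      (((Finsupp.toMultiset c).map f).sum, ((Finsupp.toMultiset c).map f).sum) := by
  induction c using Finsupp.induction_linear with
  | zero => simp [W_zero, Prod.ext_iff]
  | add c d hc hd => rw [W_add, hc, hd]; simp
  | single k a => simp [W_single, Finsupp.toMultiset_single, Multiset.map_nsmul, Multiset.sum_nsmul]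

def Cub : Set (Multiset ℕ × Multiset ℕ) :=
  {p | (∀ i ∈ p.1, 0 < i) ∧ (∀ i ∈ p.2, 0 < i ∧ Even i)}

def wtC (p : Multiset ℕ × Multiset ℕ) : ℕ × ℕ := (p.1.sum + p.2.sum, p.1.sum + p.2.sum)

theorem map_map_id (f g : ℕ → ℕ) (s : Multiset ℕ) (h : ∀ i ∈ s, f (g i) = i) :
    (s.map g).map f = s := by
  rw [Multiset.map_map]
  conv_rhs => rw [← Multiset.map_id s]
  exact Multiset.map_congr rfl h

theorem Cub_eq : gf Cub wtC = P qq * P evn := by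
  rw [P, P, gf_mul (FinW_W qq_good) (FinW_W evn_good)]
  symm
  refine gf_inv (fun p => ((Finsupp.toMultiset p.1).map (fun i => i + 1),
      (Finsupp.toMultiset p.2).map (fun i => 2 * i + 2)))
    (fun s => (Multiset.toFinsupp (s.1.map (fun i => i - 1)),
      Multiset.toFinsupp (s.2.map (fun i => i / 2 - 1)))) ?_ ?_ ?_ ?_ ?_
  · rintro ⟨c, d⟩ _
    constructor
    · intro i hi
      simp only [Multiset.mem_map] at hi
      obtain ⟨j, _, rfl⟩ := hi
      omega
    · intro i hi
      simp only [Multiset.mem_map] at hi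
      obtain ⟨j, _, rfl⟩ := hi
      exact ⟨by omega, ⟨j + 1, by ring⟩⟩
  · intro _ _; exact ⟨trivial, trivial⟩
  · rintro ⟨c, d⟩ _
    simp only
    rw [map_map_id (fun i => i - 1) (fun i => i + 1) _ (fun i _ => by simp),
      map_map_id (fun i => i / 2 - 1) (fun i => 2 * i + 2) _ (fun i _ => by omega)]
    simp
  · rintro ⟨s, t⟩ ⟨h1, h2⟩
    simp only at h1 h2 ⊢
    rw [Multiset.toFinsupp_toMultiset, Multiset.toFinsupp_toMultiset,
      map_map_id (fun i => i + 1) (fun i => i - 1) _ (fun i hi => by have := h1 i hi; omega),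
      map_map_id (fun i => 2 * i + 2) (fun i => i / 2 - 1) _ (fun i hi => by
        obtain ⟨h3, k, hk⟩ := h2 i hi
        omega)]
  · rintro ⟨c, d⟩ _
    have a := sum_map_toMultiset (fun i => i + 1) c
    have b := sum_map_toMultiset (fun i => 2 * i + 2) d
    simp only [wtC]
    rw [show qq = fun i => (i + 1, i + 1) from rfl,
      show evn = fun i => (2 * i + 2, 2 * i + 2) from rfl, a, b]
    rfl

theorem cf_Cub (m n : ℕ) : cf (gf Cub wtC) m n = if m = n then (cubicPartition n : ℤ) else 0 := by
  rw [cf_gf]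
  split_ifs with h
  · subst h
    rw [cubicPartition, ← Nat.card_coe_set_eq, Nat.cast_inj]
    refine Nat.card_congr (Equiv.subtypeEquivRight fun p => ?_)
    simp only [Cub, wtC, Set.mem_inter_iff, Set.mem_ofPred_eq, Set.mem_preimage,
      Set.mem_singleton_iff, Prod.mk.injEq]
    tauto
  · have : Cub ∩ wtC ⁻¹' {(m, n)} = ∅ := by
      ext p
      simp only [wtC, Set.mem_inter_iff, Set.mem_preimage,
        Set.mem_singleton_iff, Prod.mk.injEq, Set.mem_empty_iff_false, iff_false]
      omega
    rw [this]; simp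

noncomputable def toM (c : ℕ →₀ ℕ) : Multiset ℕ := (Finsupp.toMultiset c).map (fun i => i + 1)

theorem toM_count (c : ℕ →₀ ℕ) : (toM c).count 1 = c 0 := by
  have := Multiset.count_map_eq_count' (fun i : ℕ => i + 1) (Finsupp.toMultiset c)
    (fun a b h => by simpa using h) 0
  rw [toM]
  rw [zero_add] at this
  rw [this, Finsupp.count_toMultiset]

theorem toM_sup (c : ℕ →₀ ℕ) : (toM c).sup = topPart c := by
  refine eq_of_forall_ge_iff fun b => ?_
  rw [Multiset.sup_le, topPart, Finset.sup_le_iff]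
  simp only [toM, Multiset.mem_map, Finsupp.mem_toMultiset]
  constructor
  · intro h i hi; exact h _ ⟨i, hi, rfl⟩
  · rintro h _ ⟨i, hi, rfl⟩; exact h i hi

theorem toM_wk (k : ℕ) (c : ℕ →₀ ℕ) : W (wk k) c =
    (((toM c).filter fun p => k < p).card + (toM c).sum, (toM c).sum) := by
  induction c using Finsupp.induction_linear with
  | zero => simp [W_zero, toM, Prod.ext_iff]
  | add c d hc hd =>
    have : toM (c + d) = toM c + toM d := by simp [toM]
    rw [W_add, hc, hd, this, Multiset.filter_add, Multiset.card_add, Multiset.sum_add]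
    ext <;> simp; ring
  | single i a =>
    have : toM (Finsupp.single i a) = Multiset.replicate a (i + 1) := by
      simp [toM, Finsupp.toMultiset_single, Multiset.nsmul_singleton]
    rw [W_single, this]
    unfold wk
    by_cases h : i < k
    · have h2 : (Multiset.replicate a (i + 1)).filter (fun p => k < p) = 0 := by
        rw [Multiset.filter_eq_nil]
        intro x hx
        rw [Multiset.eq_of_mem_replicate hx]; omega
      rw [h2]; simp [h]
    · have h2 : (Multiset.replicate a (i + 1)).filter (fun p => k < p) = Multiset.replicate a (i + 1) := by
        rw [Multiset.filter_eq_self]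
        intro x hx
        rw [Multiset.eq_of_mem_replicate hx]; omega
      rw [h2]; simp [h]; ring

def crankS (s : Multiset ℕ) : ℤ :=
  if s.count 1 = 0 then (s.sup : ℤ)
  else ((s.filter fun p => s.count 1 < p).card : ℤ) - s.count 1

theorem wtK_eq (c : ℕ →₀ ℕ) : (wtK c).2 = (toM c).sum ∧
    ((wtK c).1 : ℤ) = crankS (toM c) + (toM c).sum := by
  unfold wtK crankS
  rw [toM_count]
  by_cases h : c 0 = 0
  · simp only [h, if_true]
    have := sum_map_toMultiset (fun i => i + 1) c
    rw [wtL, show qq = fun i => (i + 1, i + 1) from rfl, this, toM_sup]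
    simp [toM, add_comm]
  · simp only [h, if_false]
    have h1 := toM_wk (c 0) c
    have h2 : W (wk (c 0)) c = c 0 • (1, 1) + W (wk (c 0)) (c.erase 0) := by
      conv_lhs => rw [← Finsupp.single_add_erase 0 c, W_add, W_single]
      have : (Finsupp.single 0 (c 0) + c.erase 0 : ℕ →₀ ℕ) 0 = c 0 := by simp
      rw [Finsupp.single_add_erase]
      congr 2
      unfold wk; rw [if_pos (by omega)]
    rw [h1] at h2
    have h3 := congrArg Prod.fst h2
    have h4 := congrArg Prod.snd h2
    simp at h3 h4
    refine ⟨?_, ?_⟩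
    · simp [h4]
    · simp only [Prod.fst_add]
      omega

theorem toM_injective : Function.Injective toM := by
  intro c d h
  have := Multiset.map_injective (f := fun i : ℕ => i + 1) (fun a b h => by simpa using h) h
  rw [← Finsupp.toMultiset_toFinsupp c, this, Finsupp.toMultiset_toFinsupp]

theorem card_crank (m n : ℕ) : Nat.card {l : n.Partition // crank l = (m : ℤ) - n} =
    (Set.univ ∩ wtK ⁻¹' {(m, n)}).ncard := by
  rw [← Nat.card_coe_set_eq]
  symm
  have hmem : ∀ c : ↥(Set.univ ∩ wtK ⁻¹' {(m, n)}), wtK c.1 = (m, n) := fun c => c.2.2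
  refine Nat.card_eq_of_bijective (fun c => ⟨⟨toM c.1, ?_, ?_⟩, ?_⟩) ⟨?_, ?_⟩
  · intro i hi
    simp only [toM, Multiset.mem_map] at hi
    obtain ⟨j, _, rfl⟩ := hi
    omega
  · rw [← (wtK_eq c.1).1, hmem]
  · have h1 := wtK_eq c.1
    rw [hmem] at h1
    change crankS (toM c.1) = _
    simp only at h1
    rw [h1.2, ← h1.1]; ring
  · intro c d h
    simp only [Subtype.mk.injEq, Nat.Partition.mk.injEq] at h
    exact Subtype.ext (toM_injective h)
  · rintro ⟨l, hl⟩
    have hp : toM (Multiset.toFinsupp (l.parts.map (fun i => i - 1))) = l.parts := by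
      rw [toM, Multiset.toFinsupp_toMultiset]
      exact map_map_id (fun i => i + 1) (fun i => i - 1) _ (fun i hi => by
        have := l.parts_pos hi; omega)
    have h1 := wtK_eq (Multiset.toFinsupp (l.parts.map (fun i => i - 1)))
    rw [hp, l.parts_sum] at h1
    have hl' : crankS l.parts = (m : ℤ) - n := hl
    refine ⟨⟨Multiset.toFinsupp (l.parts.map (fun i => i - 1)), trivial, ?_⟩, ?_⟩
    · rw [Set.mem_preimage, Set.mem_singleton_iff]
      refine Prod.ext ?_ h1.1
      simp only
      omega
    · apply Subtype.ext
      apply Nat.Partition.ext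
      exact hp

theorem wtK_one (m : ℕ) : (Set.univ ∩ wtK ⁻¹' {(m, 1)}).ncard = if m = 0 then 1 else 0 := by
  have hw : wtK (Finsupp.single 0 1) = (0, 1) := by
    simp [wtK, W_zero]
  have hu : ∀ c, (wtK c).2 = 1 → c = Finsupp.single 0 1 := by
    intro c hc
    have h1 := (wtK_eq c).1
    have h2 := sum_map_toMultiset (fun i => i + 1) c
    change W qq c = ((toM c).sum, (toM c).sum) at h2
    rw [← h1, hc] at h2
    have h3 : ∀ i, c i * (i + 1) ≤ 1 := by
      intro i
      have := W_deg_le qq c i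
      rw [h2] at this
      simp only [qq] at this
      nlinarith
    have hne : c ≠ 0 := by
      rintro rfl
      simp [W_zero, Prod.ext_iff] at h2
    have h4 : ∀ i, i ≠ 0 → c i = 0 := by
      intro i hi
      by_contra h
      have := h3 i
      have a1 : 1 ≤ c i := by omega
      have a2 : 1 ≤ i := by omega
      nlinarith
    have h5 : c 0 = 1 := by
      have := h3 0
      have : c 0 ≠ 0 := by
        intro h0
        apply hne
        ext i
        by_cases hi : i = 0
        · rw [hi, h0]; rfl
        · exact h4 i hi
      omega
    ext i
    by_cases hi : i = 0
    · simp [hi, h5]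
    · rw [h4 i hi, Finsupp.single_apply, if_neg (by omega)]
  split_ifs with h
  · subst h
    have : (Set.univ ∩ wtK ⁻¹' {(0, 1)}) = {Finsupp.single 0 1} := by
      ext c
      simp only [Set.univ_inter, Set.mem_preimage, Set.mem_singleton_iff]
      constructor
      · intro hc; exact hu c (by rw [hc])
      · rintro rfl; exact hw
    rw [this, Set.ncard_singleton]
  · have : (Set.univ ∩ wtK ⁻¹' {(m, 1)}) = ∅ := by
      ext c
      simp only [Set.univ_inter, Set.mem_preimage, Set.mem_singleton_iff, Set.mem_empty_iff_false,
        iff_false]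
      intro hc
      have := hu c (by rw [hc])
      rw [this, hw] at hc
      simp at hc
      exact h hc.symm
    rw [this, Set.ncard_empty]

theorem cf_KK (m n : ℕ) : cf KK m n = crankM ((m : ℤ) - n) n := by
  rw [KK, cf_add, cf_sub, cf_gf, cf_mon, cf_mon, crankM]
  by_cases h : n = 1
  · subst h
    rw [wtK_one]
    simp only [Prod.mk.injEq, and_true, if_true]
    push_cast
    split_ifs <;> omega
  · rw [card_crank]
    simp [Ne.symm h, h]

theorem crankM_small (a : ℤ) (n : ℕ) (h : a < -n) : crankM a n = 0 := by
  unfold crankM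
  split_ifs with h1 h2 h3
  · subst h1; omega
  · subst h1; omega
  · rfl
  · rw [Nat.cast_eq_zero]
    have : IsEmpty {l : n.Partition // crank l = a} := by
      refine ⟨fun ⟨l, hl⟩ => ?_⟩
      have h4 : l.parts.count 1 ≤ n := by
        have e1 : Multiset.replicate (l.parts.count 1) 1 ≤ l.parts :=
          Multiset.le_count_iff_replicate_le.1 le_rfl
        obtain ⟨t, ht⟩ := Multiset.le_iff_exists_add.1 e1
        have := congrArg Multiset.sum ht
        rw [l.parts_sum, Multiset.sum_add, Multiset.sum_replicate, smul_eq_mul, mul_one] at this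
        omega
      unfold crank at hl
      split_ifs at hl <;> omega
    exact Nat.card_of_isEmpty

/-- `D(m,n) = Σ_{0 ≤ ℓ ≤ n} c(n - ℓ) · M(m - n, ℓ)`. -/
theorem Dbip_eq_sum_cubic_crankM (m n : ℕ) :
    Dbip m n = ∑ ℓ ∈ Finset.range (n + 1),
      (cubicPartition (n - ℓ) : ℤ) * crankM ((m : ℤ) - n) ℓ := by
  have key : FF - mon (1, 0) * FF = KK * gf Cub wtC := by
    rw [FF_diff, Cub_eq, ← mul_assoc, KK_mul]; ring
  rw [← cf_FF_diff, key, cf_mul, Finset.Nat.sum_antidiagonal_eq_sum_range_succ_mk]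
  refine Finset.sum_congr rfl fun l hl => ?_
  rw [Finset.mem_range] at hl
  simp only [cf_Cub, cf_KK]
  by_cases hm : n - l ≤ m
  · rw [Finset.sum_eq_single (m - (n - l), n - l)]
    · simp only [if_true]
      rw [mul_comm]
      congr 2
      omega
    · rintro ⟨a, b⟩ hab hne
      rw [HasAntidiagonal.mem_antidiagonal] at hab
      simp only at hab ⊢
      rw [if_neg, mul_zero]
      rintro rfl
      apply hne
      ext <;> simp
      omega
    · intro h
      exfalso
      apply h
      rw [HasAntidiagonal.mem_antidiagonal]
      simp only
      omega
  · rw [crankM_small _ _ (by omega), mul_zero]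
    refine Finset.sum_eq_zero ?_
    rintro ⟨a, b⟩ hab
    rw [HasAntidiagonal.mem_antidiagonal] at hab
    simp only at hab ⊢
    rw [if_neg (by omega), mul_zero]
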